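/- Let m ≥ 2, r ≥ 1 and q ≥ 1 be integers. If the group T_{r,m} contains an element of order q, then for every positive integer p the group T_{r,m} contains a finite-order element whose rotation number is p/q mod 1. -/

import Mathlib

/-!
The element of rotation number `p/q` is a power of the given element `f` of order `q`.

Let `F` be the `PL_m` lift of `f`. Since `f ^ q = 1`, the displacement `F^[q] x - x` is always an
integer multiple of `r`, and monotonicity alone forces this multiple to be a constant `k`
(`exists_iterate_eq_add`). Hence `F` has translation number `k / q` (`tendsto_iterate_div`).
If `d` divides both `k = d k'` and `q = d q'`, then `F^[q']` and the translation by `k' r` are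
commuting strictly increasing maps with equal `d`-th iterates, so they coincide, `f ^ q' = 1` and
`d = 1` as `f` has order exactly `q` (`isCoprime_of_orderOf`). So there is a natural number `j` with
`j k ≡ p` modulo `q`, and `f ^ j` has the lift `F^[j]`, of translation number
`j k / q ≡ p / q` modulo `1`.

What remains is that `F^[j]` is again a `PL_m` lift, i.e. closure of these lifts under composition
(`IsPLmLift.comp`). Subdivisions are handled through the inductive predicate `PLOn`, which adds one
affine piece at a time: it can be split at any point of `ℤ[1/m]` and translated by multiples of
`r`, so the pieces of the outer map can be pulled back along each affine piece of the inner one.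
-/


open Filter Topology

/-- The set `ℤ[1/m] = {N·m^s : N, s ∈ ℤ}` as a subset of `ℝ`. -/
def ZInvM (m : ℕ) : Set ℝ := {x : ℝ | ∃ N s : ℤ, x = (N : ℝ) * (m : ℝ) ^ s}

/-- `F : ℝ → ℝ` is a lift of an orientation-preserving `PL_m` homeomorphism from the
circle `ℝ/rℤ` to the circle `ℝ/r'ℤ`: it is strictly increasing, commutes appropriately
with the translations, and is affine on the pieces of a finite subdivision
`0 = a₀ < a₁ < ... < aₙ = r` of `[0, r]`, with slopes powers of `m`, breakpoints in
`ℤ[1/m]` and images of breakpoints in `ℤ[1/m]`. -/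
def IsPLmLift (m : ℕ) (r r' : ℝ) (F : ℝ → ℝ) : Prop :=
  StrictMono F ∧ (∀ x : ℝ, F (x + r) = F x + r') ∧
    ∃ (n : ℕ) (a : Fin (n + 1) → ℝ),
      StrictMono a ∧ a 0 = 0 ∧ a (Fin.last n) = r ∧
      (∀ i, a i ∈ ZInvM m) ∧ (∀ i, F (a i) ∈ ZInvM m) ∧
      ∀ i : Fin n, ∃ (s : ℤ) (β : ℝ),
        ∀ x ∈ Set.Icc (a i.castSucc) (a i.succ), F x = (m : ℝ) ^ s * x + β

/-- Membership in the Brown–Thompson group `T_{r,m}`, viewed inside the permutations of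
the circle `ℝ/rℤ`: `f` is induced by a `PL_m` lift. -/
def InT (r m : ℕ) (f : Equiv.Perm (AddCircle (r : ℝ))) : Prop :=
  ∃ F : ℝ → ℝ, IsPLmLift m r r F ∧ ∀ x : ℝ, f ↑x = ↑(F x)

/-- The circle homeomorphism `f` of `ℝ/rℤ` has rotation number `ρ ∈ ℝ/ℤ`: some monotone
lift `F` of `f` commuting with translation by `r` satisfies `F^[n] 0 / (r·n) → L`
with `L ≡ ρ (mod 1)`. -/
def HasRotNum (r : ℝ) (f : Equiv.Perm (AddCircle r)) (ρ : AddCircle (1 : ℝ)) : Prop :=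
  ∃ F : ℝ → ℝ, Monotone F ∧ (∀ x : ℝ, F (x + r) = F x + r) ∧ (∀ x : ℝ, f ↑x = ↑(F x)) ∧
    ∃ L : ℝ, Tendsto (fun n : ℕ => F^[n] 0 / (r * n)) atTop (𝓝 L) ∧
      ((L : AddCircle (1 : ℝ)) = ρ)

/-! ### The ring `ℤ[1/m]` -/

theorem ZInvM.zpow_mul {m : ℕ} (hm : 2 ≤ m) {x : ℝ} (hx : x ∈ ZInvM m) (t : ℤ) :
    (m : ℝ) ^ t * x ∈ ZInvM m := by
  obtain ⟨N, s, rfl⟩ := hx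
  have h0 : (m : ℝ) ≠ 0 := by positivity
  exact ⟨N, s + t, by rw [zpow_add₀ h0]; ring⟩

theorem ZInvM.neg {m : ℕ} {x : ℝ} (hx : x ∈ ZInvM m) : -x ∈ ZInvM m := by
  obtain ⟨N, s, rfl⟩ := hx
  exact ⟨-N, s, by push_cast; ring⟩

theorem ZInvM.intCast {m : ℕ} (N : ℤ) : (N : ℝ) ∈ ZInvM m := ⟨N, 0, by simp⟩

theorem ZInvM.add {m : ℕ} (hm : 2 ≤ m) {x y : ℝ} (hx : x ∈ ZInvM m) (hy : y ∈ ZInvM m) :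
    x + y ∈ ZInvM m := by
  have h0 : (m : ℝ) ≠ 0 := by positivity
  obtain ⟨N, s, rfl⟩ := hx
  obtain ⟨M, t, rfl⟩ := hy
  wlog hst : s ≤ t generalizing N M s t
  · rw [add_comm]
    exact this M t N s (by omega)
  obtain ⟨n, rfl⟩ := Int.le.dest hst
  refine ⟨N + M * (m : ℤ) ^ n, s, ?_⟩
  rw [zpow_add₀ h0, zpow_natCast]
  push_cast
  ring

theorem ZInvM.sub {m : ℕ} (hm : 2 ≤ m) {x y : ℝ} (hx : x ∈ ZInvM m) (hy : y ∈ ZInvM m) :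
    x - y ∈ ZInvM m := by
  rw [sub_eq_add_neg]
  exact ZInvM.add hm hx (ZInvM.neg hy)

/-! ### `PL_m` maps on intervals -/

/-- `PLOn m F a b`: on `[a, b]` the map `F` is affine with slopes powers of `m` along a finite
subdivision whose points, and their images, lie in `ℤ[1/m]`. The degenerate interval `a = b` is
allowed, and subdivisions grow by one piece on the right. -/
inductive PLOn (m : ℕ) (F : ℝ → ℝ) (a : ℝ) : ℝ → Prop
  | refl (ha : a ∈ ZInvM m) (hFa : F a ∈ ZInvM m) : PLOn m F a a
  | step {b c : ℝ} (hab : PLOn m F a b) (hbc : b < c) (hc : c ∈ ZInvM m) (hFc : F c ∈ ZInvM m)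
      (haff : ∃ (s : ℤ) (β : ℝ), ∀ x ∈ Set.Icc b c, F x = (m : ℝ) ^ s * x + β) : PLOn m F a c

namespace PLOn

variable {m : ℕ} {F G : ℝ → ℝ} {a b c : ℝ}

theorem right_mem (h : PLOn m F a b) : b ∈ ZInvM m ∧ F b ∈ ZInvM m := by
  cases h with
  | refl ha hFa => exact ⟨ha, hFa⟩
  | step _ _ hc hFc _ => exact ⟨hc, hFc⟩

theorem left_mem (h : PLOn m F a b) : a ∈ ZInvM m ∧ F a ∈ ZInvM m := by
  induction h with
  | refl ha hFa => exact ⟨ha, hFa⟩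
  | step _ _ _ _ _ ih => exact ih

theorem le (h : PLOn m F a b) : a ≤ b := by
  induction h with
  | refl => exact le_rfl
  | step _ hbc _ _ _ ih => exact ih.trans hbc.le

theorem trans (h : PLOn m F a b) (h' : PLOn m F b c) : PLOn m F a c := by
  induction h' with
  | refl => exact h
  | step _ hbc hc hFc haff ih => exact ih.step hbc hc hFc haff

/-- A `PL_m` map can be cut at any point of `ℤ[1/m]`, since its affine pieces preserve
`ℤ[1/m]`. -/
theorem split (hm : 2 ≤ m) (h : PLOn m F a b) (hc : c ∈ ZInvM m) (hac : a ≤ c) (hcb : c ≤ b) :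
    PLOn m F a c ∧ PLOn m F c b := by
  induction h with
  | refl ha hFa =>
    obtain rfl := le_antisymm hac hcb
    exact ⟨.refl ha hFa, .refl ha hFa⟩
  | @step b d hab hbd hd hFd haff ih =>
    rcases le_or_gt c b with h | h
    · obtain ⟨h1, h2⟩ := ih h
      exact ⟨h1, h2.step hbd hd hFd haff⟩
    · obtain ⟨s, β, hs⟩ := haff
      have hFc : F c ∈ ZInvM m := by
        have e : F c = F d + (m : ℝ) ^ s * (c - d) := by
          rw [hs c ⟨h.le, hcb⟩, hs d ⟨hbd.le, le_rfl⟩]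
          ring
        rw [e]
        exact ZInvM.add hm hFd (ZInvM.zpow_mul hm (ZInvM.sub hm hc hd) s)
      refine ⟨hab.step h hc hFc ⟨s, β, fun x hx => hs x ⟨hx.1, hx.2.trans hcb⟩⟩, ?_⟩
      rcases hcb.eq_or_lt with rfl | h'
      · exact .refl hc hFc
      · exact (PLOn.refl hc hFc).step h' hd hFd ⟨s, β, fun x hx => hs x ⟨h.le.trans hx.1, hx.2⟩⟩

theorem translate (hm : 2 ≤ m) {t : ℝ} (ht : t ∈ ZInvM m) (hF : ∀ x, F (x + t) = F x + t)
    (h : PLOn m F a b) : PLOn m F (a + t) (b + t) := by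
  induction h with
  | refl ha hFa => exact .refl (ZInvM.add hm ha ht) (by rw [hF]; exact ZInvM.add hm hFa ht)
  | step _ hbc hc hFc haff ih =>
    obtain ⟨s, β, hs⟩ := haff
    refine ih.step (by linarith) (ZInvM.add hm hc ht) (by rw [hF]; exact ZInvM.add hm hFc ht)
      ⟨s, β + t - (m : ℝ) ^ s * t, fun x hx => ?_⟩
    have e := hs (x - t) ⟨by linarith [hx.1], by linarith [hx.2]⟩
    have e' := hF (x - t)
    rw [sub_add_cancel] at e'
    rw [e', e]
    ring

/-- Pulling back the pieces of `G` along a single affine piece of `F`. The pulled-back endpoint is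
the preimage of `c` under the affine formula for `F`. -/
theorem comp_affine (hm : 2 ≤ m) {s : ℤ} {β : ℝ}
    (hs : ∀ x ∈ Set.Icc a b, F x = (m : ℝ) ^ s * x + β) (ha : a ∈ ZInvM m) (hab : a ≤ b)
    (hFa : F a ∈ ZInvM m) (h : PLOn m G (F a) c) (hc : c ≤ F b) :
    PLOn m (G ∘ F) a ((m : ℝ) ^ (-s) * (c - β)) := by
  have h0 : (m : ℝ) ≠ 0 := by positivity
  have hpos : (0 : ℝ) < (m : ℝ) ^ s := by positivity
  have hneg : (0 : ℝ) < (m : ℝ) ^ (-s) := by positivity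
  have hinv : (m : ℝ) ^ (-s) * (m : ℝ) ^ s = 1 := by rw [← zpow_add₀ h0]; simp
  have ea := hs a ⟨le_rfl, hab⟩
  have eb := hs b ⟨hab, le_rfl⟩
  have hβ : β ∈ ZInvM m := by
    have e : β = F a - (m : ℝ) ^ s * a := by rw [ea]; ring
    rw [e]
    exact ZInvM.sub hm hFa (ZInvM.zpow_mul hm ha s)
  have pa : (m : ℝ) ^ (-s) * (F a - β) = a := by
    rw [ea, add_sub_cancel_right, ← mul_assoc, hinv, one_mul]
  have pb : (m : ℝ) ^ (-s) * (F b - β) = b := by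
    rw [eb, add_sub_cancel_right, ← mul_assoc, hinv, one_mul]
  have pmono : ∀ {u v : ℝ}, u ≤ v → (m : ℝ) ^ (-s) * (u - β) ≤ (m : ℝ) ^ (-s) * (v - β) :=
    fun huv => mul_le_mul_of_nonneg_left (by linarith) hneg.le
  have Fp : ∀ u, F a ≤ u → u ≤ F b → F ((m : ℝ) ^ (-s) * (u - β)) = u := by
    intro u h1 h2
    rw [hs _ ⟨by rw [← pa]; exact pmono h1, (pmono h2).trans_eq pb⟩, ← mul_assoc,
      mul_comm ((m : ℝ) ^ s), hinv]
    ring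
  induction h with
  | refl _ hGFa =>
    rw [pa]
    exact .refl ha hGFa
  | @step d e hd hde he hGe haff ih =>
    obtain ⟨t, γ, ht⟩ := haff
    have hFe := Fp e (hd.le.trans hde.le) hc
    refine (ih (hde.le.trans hc)).step (mul_lt_mul_of_pos_left (by linarith) hneg)
      (ZInvM.zpow_mul hm (ZInvM.sub hm he hβ) _) (by rwa [Function.comp_apply, hFe])
      ⟨t + s, (m : ℝ) ^ t * β + γ, fun x hx => ?_⟩
    have hxa : a ≤ x := by
      refine le_trans ?_ hx.1
      rw [← pa]
      exact pmono hd.le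
    have hxb : x ≤ b := hx.2.trans ((pmono hc).trans_eq pb)
    have ex := hs x ⟨hxa, hxb⟩
    have hx' : (m : ℝ) ^ (-s) * (F x - β) = x := by
      rw [ex, add_sub_cancel_right, ← mul_assoc, hinv, one_mul]
    have h1 : d ≤ F x := by
      have := hx.1
      rw [← hx'] at this
      linarith [le_of_mul_le_mul_left this hneg]
    have h2 : F x ≤ e := by
      have := hx.2
      rw [← hx'] at this
      linarith [le_of_mul_le_mul_left this hneg]
    rw [Function.comp_apply, ht _ ⟨h1, h2⟩, ex, zpow_add₀ h0]
    ring

theorem comp (hm : 2 ≤ m) (hF : Monotone F) (h : PLOn m F a b) (hG : PLOn m G (F a) (F b)) :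
    PLOn m (G ∘ F) a b := by
  induction h with
  | refl ha _ => exact .refl ha hG.left_mem.2
  | @step b c hab hbc hc hFc haff ih =>
    obtain ⟨h1, h2⟩ := hG.split hm hab.right_mem.2 (hF hab.le) (hF hbc.le)
    refine (ih h1).trans ?_
    obtain ⟨s, β, hs⟩ := haff
    have h0 : (m : ℝ) ≠ 0 := by positivity
    have := comp_affine hm hs hab.right_mem.1 hbc.le hab.right_mem.2 h2 le_rfl
    rwa [hs c ⟨hbc.le, le_rfl⟩, add_sub_cancel_right, ← mul_assoc, ← zpow_add₀ h0,
      neg_add_cancel, zpow_zero, one_mul] at this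

/-- A map commuting with the translation by `r` that is `PL_m` on `[0, r]` is `PL_m` on every
interval with endpoints in `ℤ[1/m]`. -/
theorem of_periodic (hm : 2 ≤ m) {r : ℕ} (hr : 1 ≤ r)
    (hF : ∀ x (k : ℤ), F (x + k * r) = F x + k * r) (h : PLOn m F 0 r) (ha : a ∈ ZInvM m)
    (hb : b ∈ ZInvM m) (hab : a ≤ b) : PLOn m F a b := by
  have hr' : (1 : ℝ) ≤ r := by exact_mod_cast hr
  have hZ : ∀ k : ℤ, ((k : ℝ) * r) ∈ ZInvM m := fun k => by
    have := ZInvM.intCast (m := m) (k * r)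
    push_cast at this
    exact this
  have key : ∀ (k : ℤ) (n : ℕ), PLOn m F (k * r) (k * r + n * r) := by
    intro k n
    induction n with
    | zero =>
      have := (h.translate hm (hZ k) (fun x => hF x k)).left_mem
      rw [zero_add] at this
      simpa using PLOn.refl this.1 this.2
    | succ n ih =>
      refine ih.trans ?_
      have := h.translate hm (hZ (k + n)) (fun x => hF x _)
      push_cast at this ⊢
      convert this using 1 <;> ring
  obtain ⟨N, hN⟩ := exists_nat_ge (max |a| |b|)
  have hNa := abs_le.1 ((le_max_left _ _).trans hN)
  have hNb := abs_le.1 ((le_max_right _ _).trans hN)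
  have hNr : (N : ℝ) ≤ N * r := le_mul_of_one_le_right (Nat.cast_nonneg N) hr'
  have hbig := key (-N) (2 * N)
  push_cast at hbig
  have h1 := (hbig.split hm ha (by linarith) (by linarith)).2
  exact (h1.split hm hb hab (by linarith)).1

theorem exists_subdivision (h : PLOn m F a b) : ∃ (n : ℕ) (u : Fin (n + 1) → ℝ),
    StrictMono u ∧ u 0 = a ∧ u (Fin.last n) = b ∧
      (∀ i, u i ∈ ZInvM m) ∧ (∀ i, F (u i) ∈ ZInvM m) ∧
      ∀ i : Fin n, ∃ (s : ℤ) (β : ℝ),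
        ∀ x ∈ Set.Icc (u i.castSucc) (u i.succ), F x = (m : ℝ) ^ s * x + β := by
  induction h with
  | refl ha hFa =>
    exact ⟨0, fun _ => a, fun i j hij => absurd hij (by omega), rfl, rfl, fun _ => ha, fun _ => hFa,
      fun i => i.elim0⟩
  | @step b c hab hbc hc hFc haff ih =>
    obtain ⟨n, u, hu, hu0, hul, hZ, hFZ, hA⟩ := ih
    refine ⟨n + 1, Fin.snoc (α := fun _ => ℝ) u c, ?_, ?_, ?_, ?_, ?_, ?_⟩
    · rw [Fin.strictMono_iff_lt_succ]
      intro i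
      induction i using Fin.lastCases with
      | last => simpa [hul] using hbc
      | cast i =>
        rw [Fin.snoc_castSucc, ← Fin.castSucc_succ, Fin.snoc_castSucc]
        exact hu i.castSucc_lt_succ
    · rw [← Fin.castSucc_zero, Fin.snoc_castSucc, hu0]
    · rw [Fin.snoc_last]
    · intro i
      induction i using Fin.lastCases with
      | last => simpa using hc
      | cast i => simpa using hZ i
    · intro i
      induction i using Fin.lastCases with
      | last => simpa using hFc
      | cast i => simpa using hFZ i
    · intro i
      induction i using Fin.lastCases with
      | last => simpa [hul] using haff
      | cast i =>
        rw [Fin.snoc_castSucc, ← Fin.castSucc_succ, Fin.snoc_castSucc]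
        exact hA i

theorem of_subdivision {n : ℕ} {u : Fin (n + 1) → ℝ} (hu : StrictMono u)
    (hZ : ∀ i, u i ∈ ZInvM m) (hFZ : ∀ i, F (u i) ∈ ZInvM m)
    (hA : ∀ i : Fin n, ∃ (s : ℤ) (β : ℝ),
      ∀ x ∈ Set.Icc (u i.castSucc) (u i.succ), F x = (m : ℝ) ^ s * x + β) (i : Fin (n + 1)) :
    PLOn m F (u 0) (u i) := by
  induction i using Fin.induction with
  | zero => exact .refl (hZ 0) (hFZ 0)
  | succ i ih => exact ih.step (hu i.castSucc_lt_succ) (hZ _) (hFZ _) (hA i)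

end PLOn

/-! ### Composition of `PL_m` lifts -/

theorem map_add_int_mul {F : ℝ → ℝ} {r : ℝ} (hF : ∀ x, F (x + r) = F x + r) (x : ℝ) (k : ℤ) :
    F (x + k * r) = F x + k * r := by
  have hnat : ∀ (n : ℕ) (x : ℝ), F (x + n * r) = F x + n * r := by
    intro n
    induction n with
    | zero => simp
    | succ n ih =>
      intro x
      push_cast
      rw [add_mul, one_mul, ← add_assoc, hF, ih, add_assoc]
  obtain ⟨n, rfl | rfl⟩ := k.eq_nat_or_neg
  · exact_mod_cast hnat n x
  · have := hnat n (x + ((-n : ℤ) : ℝ) * r)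
    push_cast at this ⊢
    rw [add_assoc, neg_mul, neg_add_cancel, add_zero] at this
    rw [neg_mul]
    linarith

theorem IsPLmLift.plOn {m r : ℕ} {F : ℝ → ℝ} (h : IsPLmLift m r r F) : PLOn m F 0 r := by
  obtain ⟨-, -, n, u, hu, h0, hl, hZ, hFZ, hA⟩ := h
  rw [← hl, ← h0]
  exact PLOn.of_subdivision hu hZ hFZ hA _

theorem IsPLmLift.comp {m r : ℕ} (hm : 2 ≤ m) (hr : 1 ≤ r) {F G : ℝ → ℝ}
    (hG : IsPLmLift m r r G) (hF : IsPLmLift m r r F) : IsPLmLift m r r (G ∘ F) := by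
  refine ⟨hG.1.comp hF.1, fun x => by simp [hF.2.1, hG.2.1], PLOn.exists_subdivision ?_⟩
  refine hF.plOn.comp hm hF.1.monotone ?_
  exact hG.plOn.of_periodic hm hr (map_add_int_mul hG.2.1) hF.plOn.left_mem.2 hF.plOn.right_mem.2
    (hF.1.monotone hF.plOn.le)

theorem IsPLmLift.iterate {m r : ℕ} (hm : 2 ≤ m) (hr : 1 ≤ r) {F : ℝ → ℝ}
    (hF : IsPLmLift m r r F) (j : ℕ) : IsPLmLift m r r F^[j] := by
  induction j with
  | zero =>
    have h0 : (0 : ℝ) ∈ ZInvM m := by simpa using ZInvM.intCast (m := m) 0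
    have hr' : (r : ℝ) ∈ ZInvM m := by simpa using ZInvM.intCast (m := m) r
    exact ⟨strictMono_id, fun x => rfl, PLOn.exists_subdivision
      ((PLOn.refl h0 h0).step (by exact_mod_cast hr) hr' hr' ⟨0, 0, fun x _ => by simp⟩)⟩
  | succ j ih =>
    rw [Function.iterate_succ']
    exact hF.comp hm hr ih

/-! ### Rotation numbers of finite-order elements -/

theorem perm_pow_coe {r : ℝ} {f : Equiv.Perm (AddCircle r)} {F : ℝ → ℝ}
    (hf : ∀ x : ℝ, f ↑x = ↑(F x)) (n : ℕ) (x : ℝ) : (f ^ n) ↑x = ↑(F^[n] x) := by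
  induction n with
  | zero => rfl
  | succ n ih => rw [pow_succ', Equiv.Perm.mul_apply, ih, hf, Function.iterate_succ_apply']

/-- A monotone lift of the identity of `ℝ/rℤ` is the translation by a constant multiple of `r`. -/
theorem exists_eq_add {r : ℝ} (hr : 0 < r) {H : ℝ → ℝ} (hH : Monotone H)
    (hHr : ∀ x, H (x + r) = H x + r) (hid : ∀ x : ℝ, ((H x : ℝ) : AddCircle r) = x) :
    ∃ k : ℤ, ∀ x, H x = x + k * r := by
  have hk : ∀ x, ∃ k : ℤ, H x = x + k * r := by
    intro x
    obtain ⟨n, hn⟩ := AddSubgroup.mem_zmultiples_iff.1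
      ((QuotientAddGroup.eq_iff_sub_mem (N := AddSubgroup.zmultiples r)).1 (hid x))
    refine ⟨n, ?_⟩
    rw [zsmul_eq_mul] at hn
    linarith
  choose k hk using hk
  refine ⟨k 0, fun x => ?_⟩
  -- Move `x` into `[0, r)` and compare with the endpoints `0` and `r`.
  obtain ⟨n, ⟨hn0, hnr⟩, -⟩ := existsUnique_add_zsmul_mem_Ico hr x 0
  rw [zsmul_eq_mul] at hn0 hnr
  rw [zero_add] at hnr
  have e := map_add_int_mul hHr x n
  have e0 := hk 0
  have e1 := hHr 0
  have h1 := hH hn0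
  have h2 := hH hnr.le
  rw [zero_add] at e0 e1
  rw [e, hk x] at h1 h2
  rw [e0] at e1 h1
  rw [e1] at h2
  rcases hn0.eq_or_lt with h | h
  · rw [← h, e0] at e
    linarith
  · have h3 : ((k 0 : ℤ) : ℝ) < k x + 1 := by
      by_contra hc
      push Not at hc
      nlinarith
    have h4 : ((k x : ℤ) : ℝ) < k 0 + 1 := by
      by_contra hc
      push Not at hc
      nlinarith
    have h3' : k 0 < k x + 1 := by exact_mod_cast h3
    have h4' : k x < k 0 + 1 := by exact_mod_cast h4
    rw [hk x, show k x = k 0 by omega]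

theorem iterate_add_int_mul {F : ℝ → ℝ} {r : ℝ} (hF : ∀ x, F (x + r) = F x + r) (n : ℕ) (x : ℝ)
    (k : ℤ) : F^[n] (x + k * r) = F^[n] x + k * r :=
  (Function.Commute.iterate_left (f := F) (g := fun x => x + k * r)
    (fun x => map_add_int_mul hF x k) n) x

/-- If the `q`-th iterate of a lift is the translation by `k r`, the displacement of the `n`-th
iterate differs from `n k r / q` by a function of `n mod q`, so the translation number is
`k / q`. -/
theorem tendsto_iterate_div {r : ℝ} (hr : 0 < r) {F : ℝ → ℝ} (hF : ∀ x, F (x + r) = F x + r)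
    {q : ℕ} (hq : 1 ≤ q) {k : ℤ} (hk : ∀ x, F^[q] x = x + k * r) :
    Tendsto (fun n : ℕ => F^[n] 0 / (r * n)) atTop (𝓝 (k / q)) := by
  have hq' : (q : ℝ) ≠ 0 := by positivity
  let d : ℕ → ℝ := fun n => F^[n] 0 - n * (k * r / q)
  have hper : Function.Periodic d q := by
    intro n
    simp only [d]
    rw [Function.iterate_add_apply, hk, iterate_add_int_mul hF]
    push_cast
    field_simp
    ring
  obtain ⟨C, hC⟩ : ∃ C, ∀ n, |d n| ≤ C := by
    refine ⟨∑ i ∈ Finset.range q, |d i|, fun n => ?_⟩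
    rw [← hper.map_mod_nat n]
    exact Finset.single_le_sum (f := fun i => |d i|) (fun i _ => abs_nonneg _)
      (Finset.mem_range.2 (Nat.mod_lt n hq))
  have hden : Tendsto (fun n : ℕ => r * (n : ℝ)) atTop atTop :=
    tendsto_natCast_atTop_atTop.const_mul_atTop hr
  have hlim : Tendsto (fun n : ℕ => d n / (r * n)) atTop (𝓝 0) := by
    refine squeeze_zero_norm' ?_ (hden.const_div_atTop C)
    filter_upwards with n
    rw [norm_div, Real.norm_eq_abs, Real.norm_of_nonneg (by positivity : 0 ≤ r * (n : ℝ))]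
    exact div_le_div_of_nonneg_right (hC n) (by positivity)
  have := hlim.add_const ((k : ℝ) / q)
  rw [zero_add] at this
  refine this.congr' ?_
  filter_upwards [eventually_gt_atTop 0] with n hn
  have hn' : (n : ℝ) ≠ 0 := by positivity
  simp only [d]
  field_simp
  ring

theorem exists_iterate_eq_add {r : ℝ} (hr : 0 < r) {f : Equiv.Perm (AddCircle r)} {F : ℝ → ℝ}
    (hmono : Monotone F) (hF : ∀ x, F (x + r) = F x + r) (hf : ∀ x : ℝ, f ↑x = ↑(F x)) {q : ℕ}
    (hq : f ^ q = 1) : ∃ k : ℤ, ∀ x, F^[q] x = x + k * r := by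
  refine exists_eq_add hr (hmono.iterate q) (fun x => ?_) (fun x => ?_)
  · simpa using iterate_add_int_mul hF q x 1
  · rw [← perm_pow_coe hf, hq, Equiv.Perm.one_apply]

/-- The rotation number `k / q` of an element of order exactly `q` is in lowest terms: a common
divisor of `k` and `q` would make a smaller power of `f` trivial. -/
theorem isCoprime_of_orderOf {r : ℝ} {f : Equiv.Perm (AddCircle r)} {F : ℝ → ℝ}
    (hmono : StrictMono F) (hF : ∀ x, F (x + r) = F x + r) (hf : ∀ x : ℝ, f ↑x = ↑(F x)) {q : ℕ}
    (hq : 1 ≤ q) (hord : orderOf f = q) {k : ℤ} (hk : ∀ x, F^[q] x = x + k * r) :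
    IsCoprime k (q : ℤ) := by
  rw [Int.isCoprime_iff_gcd_eq_one]
  have hdq : k.gcd q ∣ q := by exact_mod_cast Int.gcd_dvd_right k q
  have hdk : ((k.gcd q : ℕ) : ℤ) ∣ k := Int.gcd_dvd_left k q
  generalize k.gcd q = d at hdq hdk
  obtain ⟨q', rfl⟩ := hdq
  obtain ⟨k', rfl⟩ := hdk
  have hd : 0 < d := Nat.pos_of_mul_pos_right hq
  have hq' : 0 < q' := Nat.pos_of_mul_pos_left hq
  have htr : ∀ (n : ℕ) (x : ℝ), (fun x : ℝ => x + k' * r)^[n] x = x + n * (k' * r) := by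
    intro n x
    induction n with
    | zero => simp
    | succ n ih =>
      rw [Function.iterate_succ_apply', ih]
      push_cast
      ring
  have hcomm : Function.Commute F^[q'] (fun x => x + k' * r) := fun x =>
    iterate_add_int_mul hF q' x k'
  have key : ∀ x, F^[q'] x = x + k' * r := by
    intro x
    refine (hcomm.iterate_pos_eq_iff_map_eq (hmono.monotone.iterate q')
      (fun a b hab => by simpa using hab) hd).1 ?_
    rw [htr, ← Function.iterate_mul, mul_comm, hk]
    push_cast
    ring
  have h1 : f ^ q' = 1 := by
    ext y
    induction y using QuotientAddGroup.induction_on with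
    | H x =>
      have := perm_pow_coe hf q' x
      rw [key] at this
      refine this.trans ?_
      rw [Equiv.Perm.one_apply, AddCircle.coe_add, ← zsmul_eq_mul, AddCircle.coe_zsmul,
        AddCircle.coe_period, smul_zero, add_zero]
  have h2 := Nat.le_of_dvd hq' (orderOf_dvd_of_pow_eq_one h1)
  rw [hord] at h2
  nlinarith

/-- If `T_{r,m}` contains an element of order `q`, then for every positive integer `p`
it contains a finite-order element of rotation number `p/q (mod 1)`. -/
theorem exists_finite_order_with_rot_num (m r q : ℕ) (hm : 2 ≤ m) (hr : 1 ≤ r) (hq : 1 ≤ q)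
    (h : ∃ f : Equiv.Perm (AddCircle (r : ℝ)), InT r m f ∧ orderOf f = q) :
    ∀ p : ℕ, 0 < p → ∃ g : Equiv.Perm (AddCircle (r : ℝ)),
      InT r m g ∧ IsOfFinOrder g ∧
        HasRotNum r g (((p : ℝ) / (q : ℝ) : ℝ) : AddCircle (1 : ℝ)) := by
  intro p _
  obtain ⟨f, ⟨F, hFT, hf⟩, hord⟩ := h
  have hr0 : (0 : ℝ) < r := by exact_mod_cast hr
  have hfq : f ^ q = 1 := hord ▸ pow_orderOf_eq_one f
  obtain ⟨k, hk⟩ := exists_iterate_eq_add hr0 hFT.1.monotone hFT.2.1 hf hfq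
  obtain ⟨u, v, huv⟩ := isCoprime_of_orderOf hFT.1 hFT.2.1 hf hq hord hk
  have hq0 : (0 : ℤ) < q := by exact_mod_cast hq
  -- `u` inverts `k` modulo `q`, so `j ≡ u p` satisfies `j k ≡ p`.
  obtain ⟨j, hj⟩ := Int.eq_ofNat_of_zero_le (Int.emod_nonneg (u * p) hq0.ne')
  have hjk : ∃ t : ℤ, (j : ℤ) * k = p + t * q := by
    refine ⟨-(v * p) - (u * p / q) * k, ?_⟩
    have h1 := Int.emod_add_mul_ediv (u * p) q
    rw [hj] at h1
    linear_combination k * h1 + p * huv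
  obtain ⟨t, ht⟩ := hjk
  have hT := hFT.iterate hm hr j
  have hfj : ∀ x : ℝ, (f ^ j) ↑x = ↑(F^[j] x) := perm_pow_coe hf j
  have hjq : ∀ x, (F^[j])^[q] x = x + ((j * k : ℤ) : ℝ) * r := by
    intro x
    have h1 : ∀ n : ℕ, (F^[q])^[n] x = x + n * (k * r) := by
      intro n
      induction n with
      | zero => simp
      | succ n ih =>
        rw [Function.iterate_succ_apply', ih, hk]
        push_cast
        ring
    rw [← Function.iterate_mul, mul_comm, Function.iterate_mul, h1]
    push_cast
    ring
  refine ⟨f ^ j, ⟨F^[j], hT, hfj⟩, (isOfFinOrder_iff_pow_eq_one.2 ⟨q, hq, hfq⟩).pow, F^[j],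
    hT.1.monotone, hT.2.1, hfj, _, tendsto_iterate_div hr0 hT.2.1 hq hjq, ?_⟩
  have hq' : (q : ℝ) ≠ 0 := by positivity
  have e : ((j * k : ℤ) : ℝ) / q = (p : ℝ) / q + t := by
    rw [ht]
    push_cast
    field_simp
  rw [e, AddCircle.coe_add]
  have : ((t : ℝ) : AddCircle (1 : ℝ)) = 0 := by
    rw [← mul_one (t : ℝ), ← zsmul_eq_mul, AddCircle.coe_zsmul, AddCircle.coe_period, smul_zero]
  rw [this, add_zero]
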